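/- The set Π^(3)_{▽,∞} = {π_▽(ℱ) : ℱ a family of 3-graphs} contains an irrational number. -/

import Mathlib

/-!
The irrational value is `qval = 2 / (3 √3)`, the maximum of `x - x ^ 3` on `[0, 1]`, attained at
`x = 1 / √3`. It is the uniform Turán density of the (infinite) family of all 3-graphs outside the
hereditary class `Cls`: a 3-graph lies in `Cls` if for some ranking of the vertices and some graph
`G` every edge `{u, v, w}` has a unique vertex `w` of top rank, its apex, with `uv` an edge of `G`
and `uw`, `vw` not both edges of `G`. Since `Cls` is hereditary, avoiding the family is the same as
lying in `Cls` (`avoids_iff`). If `G` were quasirandom of density `x`, such a pattern would have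
density `x - x ^ 3`: all triples with `uv` in `G`, minus the triangles of `G`.

Upper bound (`upper_bound`). No regularity lemma is needed. Let `U 0 ⊆ U 1 ⊆ ...` be initial
segments of the ranking that grow by a fixed proportion of the vertices. A pigeonhole argument along
this chain gives `X, Y ⊆ U k` whose `G`-density is at most `m + ε`, while all pairs of large subsets
of `U (k + 1)` have density at least `m` (`upper_aux`). With `Z` the vertices of `U (k + 1)` outside
`U k`, every edge on `X × Y × Z` has its apex in `Z`. Most `z ∈ Z` have at least `m |X|` neighbours
in `X` and `m |Y|` in `Y`, and these neighbourhoods span at least `m ^ 3 |X| |Y|` pairs of `G`, so at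
most about `(m - m ^ 3) |X| |Y| |Z|` edges remain (`patt_upper`).

Lower bound (`lower_bound`). The vertices are triples (level, `a`, `b`) with `M` levels and
`a, b ∈ ZMod p`; the level is the rank, and two vertices are joined when `b + b' + a a'` lies in
`{0, ..., k - 1}`, where `k = ⌊p / √3⌋`. For `a ≠ a'` the codegree correlation vanishes exactly
(`sum_bal_mul`), so by Cauchy–Schwarz the graph has small cut norm deviation from density `k / p`
(`sum_abs_dev_le`). Hence the full 3-graph of allowed edges has uniform density at least
`x - x ^ 3` with `x = k / p ≈ 1 / √3`, up to an error of order `1 / M` coming from rank ties and of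
order `M / √p` from the cut norm (`eVVV_fullGraph_ge`). Since `x - x ^ 3` differs
from `qval` by `O(1 / p)` (`qval_sub_le`), the 3-graphs are `(qval, η)`-dense once `M` and `p` are
large.
-/

open Finset

/-- A 3-uniform hypergraph: a finite vertex set (of naturals) together with a set of
3-element subsets of it as edges. -/
structure ThreeGraph where
  verts : Finset ℕ
  edges : Finset (Finset ℕ)
  edge_sub : ∀ e ∈ edges, e ⊆ verts
  edge_card : ∀ e ∈ edges, e.card = 3

/-- `F` occurs as a subhypergraph of `H`. -/
def IsSubhypergraph (F H : ThreeGraph) : Prop :=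
  ∃ f : ℕ → ℕ, Set.InjOn f ↑F.verts ∧ (∀ v ∈ F.verts, f v ∈ H.verts) ∧
    ∀ e ∈ F.edges, e.image f ∈ H.edges

noncomputable section

/-- Number of triples `(x,y,z) ∈ X × Y × Z` with `{x,y,z}` an edge of `H`. -/
def eVVV (H : ThreeGraph) (X Y Z : Finset ℕ) : ℕ :=
  ((X ×ˢ Y ×ˢ Z).filter fun p => ({p.1, p.2.1, p.2.2} : Finset ℕ) ∈ H.edges).card

/-- `H` is `(d,η,▽)`-dense. -/
def IsDenseVVV (H : ThreeGraph) (d η : ℝ) : Prop :=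
  ∀ X Y Z : Finset ℕ, X ⊆ H.verts → Y ⊆ H.verts → Z ⊆ H.verts →
    (eVVV H X Y Z : ℝ) ≥ d * X.card * Y.card * Z.card - η * (H.verts.card : ℝ) ^ 3

/-- Number of ordered triples `(x,y,z)` with `x ∈ X`, `{y,z} ∈ P` and `{x,y,z}` an edge. -/
def eEV (H : ThreeGraph) (X : Finset ℕ) (P : Finset (Finset ℕ)) : ℕ :=
  ((X ×ˢ H.verts ×ˢ H.verts).filter fun p =>
    ({p.2.1, p.2.2} : Finset ℕ) ∈ P ∧ ({p.1, p.2.1, p.2.2} : Finset ℕ) ∈ H.edges).card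

/-- `H` is `(d,η,e↦v)`-dense. -/
def IsDenseEV (H : ThreeGraph) (d η : ℝ) : Prop :=
  ∀ (X : Finset ℕ) (P : Finset (Finset ℕ)), X ⊆ H.verts →
    (∀ p ∈ P, p ⊆ H.verts ∧ p.card = 2) →
    (eEV H X P : ℝ) ≥ d * X.card * P.card - η * (H.verts.card : ℝ) ^ 3

/-- `K_{ee}(P,Q)`: ordered triples `(x,y,z)` with `{x,y} ∈ P` and `{y,z} ∈ Q`. -/
def KEE (H : ThreeGraph) (P Q : Finset (Finset ℕ)) : Finset (ℕ × ℕ × ℕ) :=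
  (H.verts ×ˢ H.verts ×ˢ H.verts).filter fun p =>
    ({p.1, p.2.1} : Finset ℕ) ∈ P ∧ ({p.2.1, p.2.2} : Finset ℕ) ∈ Q

/-- Number of triples in `K_{ee}(P,Q)` forming an edge of `H`. -/
def eEE (H : ThreeGraph) (P Q : Finset (Finset ℕ)) : ℕ :=
  ((KEE H P Q).filter fun p => ({p.1, p.2.1, p.2.2} : Finset ℕ) ∈ H.edges).card

/-- `H` is `(d,η,ee)`-dense. -/
def IsDenseEE (H : ThreeGraph) (d η : ℝ) : Prop :=
  ∀ P Q : Finset (Finset ℕ),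
    (∀ p ∈ P, p ⊆ H.verts ∧ p.card = 2) → (∀ q ∈ Q, q ⊆ H.verts ∧ q.card = 2) →
    (eEE H P Q : ℝ) ≥ d * (KEE H P Q).card - η * (H.verts.card : ℝ) ^ 3

/-- The uniform Turán density `π_▽(𝓕)` of a family `𝓕` of 3-graphs. -/
def piVVV (𝓕 : Set ThreeGraph) : ℝ :=
  sSup {d : ℝ | 0 ≤ d ∧ d ≤ 1 ∧ ∀ η : ℝ, 0 < η → ∀ n : ℕ,
    ∃ H : ThreeGraph, n ≤ H.verts.card ∧ (∀ F ∈ 𝓕, ¬ IsSubhypergraph F H) ∧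
      IsDenseVVV H d η}

/-- The uniform Turán density `π_{e↦v}(𝓕)` of a family `𝓕` of 3-graphs. -/
def piEV (𝓕 : Set ThreeGraph) : ℝ :=
  sSup {d : ℝ | 0 ≤ d ∧ d ≤ 1 ∧ ∀ η : ℝ, 0 < η → ∀ n : ℕ,
    ∃ H : ThreeGraph, n ≤ H.verts.card ∧ (∀ F ∈ 𝓕, ¬ IsSubhypergraph F H) ∧
      IsDenseEV H d η}

/-- The uniform Turán density `π_{ee}(𝓕)` of a family `𝓕` of 3-graphs. -/
def piEE (𝓕 : Set ThreeGraph) : ℝ :=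
  sSup {d : ℝ | 0 ≤ d ∧ d ≤ 1 ∧ ∀ η : ℝ, 0 < η → ∀ n : ℕ,
    ∃ H : ThreeGraph, n ≤ H.verts.card ∧ (∀ F ∈ 𝓕, ¬ IsSubhypergraph F H) ∧
      IsDenseEE H d η}

/-- A palette: a finite set of ordered triples of natural numbers (colours). -/
abbrev Palette := Finset (ℕ × ℕ × ℕ)

/-- The set of colours `Φ(𝒫)` of a palette. -/
def palColours (P : Palette) : Finset ℕ :=
  P.image (·.1) ∪ P.image (·.2.1) ∪ P.image (·.2.2)

/-- A weighting of a palette: nonnegative weights on the colours summing to 1. -/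
def IsWeighting (P : Palette) (x : ℕ → ℝ) : Prop :=
  (∀ a ∈ palColours P, 0 ≤ x a) ∧ ∑ a ∈ palColours P, x a = 1

/-- `λ^▽_𝒫(x) = Σ_{(a,b,c) ∈ 𝒫} x_a x_b x_c`. -/
def lamVVV (P : Palette) (x : ℕ → ℝ) : ℝ :=
  ∑ p ∈ P, x p.1 * x p.2.1 * x p.2.2

/-- The palette Lagrangian `Λ^▽_𝒫`. -/
def LambdaVVV (P : Palette) : ℝ :=
  sSup {l : ℝ | ∃ x : ℕ → ℝ, IsWeighting P x ∧ l = lamVVV P x}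

/-- The ordered degree Lagrangian `λ^a_𝒫(x)`. -/
def lamDeg (P : Palette) (a : ℕ) (x : ℕ → ℝ) : ℝ :=
  min (min (∑ p ∈ P.filter (fun p => p.1 = a), x p.2.1 * x p.2.2)
           (∑ p ∈ P.filter (fun p => p.2.1 = a), x p.1 * x p.2.2))
      (∑ p ∈ P.filter (fun p => p.2.2 = a), x p.1 * x p.2.1)

/-- `λ^{e↦v}_𝒫(x)`: minimum of `λ^a_𝒫(x)` over colours `a` with positive weight. -/
def lamEV (P : Palette) (x : ℕ → ℝ) : ℝ :=
  sInf {l : ℝ | ∃ a ∈ palColours P, 0 < x a ∧ l = lamDeg P a x}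

/-- The palette Lagrangian `Λ^{e↦v}_𝒫`. -/
def LambdaEV (P : Palette) : ℝ :=
  sSup {l : ℝ | ∃ x : ℕ → ℝ, IsWeighting P x ∧ l = lamEV P x}

/-- The ordered codegree Lagrangian `λ^{a,b}_𝒫(x)`. -/
def lamCodeg (P : Palette) (a b : ℕ) (x : ℕ → ℝ) : ℝ :=
  min (min (min (∑ p ∈ P.filter (fun p => p.1 = a ∧ p.2.1 = b), x p.2.2)
                (∑ p ∈ P.filter (fun p => p.1 = b ∧ p.2.1 = a), x p.2.2))
           (min (∑ p ∈ P.filter (fun p => p.1 = a ∧ p.2.2 = b), x p.2.1)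
                (∑ p ∈ P.filter (fun p => p.1 = b ∧ p.2.2 = a), x p.2.1)))
      (min (∑ p ∈ P.filter (fun p => p.2.1 = a ∧ p.2.2 = b), x p.1)
           (∑ p ∈ P.filter (fun p => p.2.1 = b ∧ p.2.2 = a), x p.1))

/-- `λ^{ee}_𝒫(x)`: minimum of `λ^{a,b}_𝒫(x)` over colours `a,b` with positive weight. -/
def lamEE (P : Palette) (x : ℕ → ℝ) : ℝ :=
  sInf {l : ℝ | ∃ a ∈ palColours P, ∃ b ∈ palColours P, 0 < x a * x b ∧ l = lamCodeg P a b x}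

/-- The palette Lagrangian `Λ^{ee}_𝒫`. -/
def LambdaEE (P : Palette) : ℝ :=
  sSup {l : ℝ | ∃ x : ℕ → ℝ, IsWeighting P x ∧ l = lamEE P x}

/-- A 3-graph `H` satisfies a palette `P`: there is an ordering of the vertices (an
injection `ord` into `ℕ`) and a colouring `φ` of the pairs of vertices with colours in
`Φ(P)` such that the ordered shadow of every edge is a triple of the palette. -/
def Satisfies (H : ThreeGraph) (P : Palette) : Prop :=
  ∃ (ord : ℕ → ℕ) (φ : Finset ℕ → ℕ),
    Set.InjOn ord ↑H.verts ∧
    (∀ u ∈ H.verts, ∀ v ∈ H.verts, u ≠ v → φ {u, v} ∈ palColours P) ∧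
    ∀ u v w : ℕ, ({u, v, w} : Finset ℕ) ∈ H.edges →
      ord u < ord v → ord v < ord w →
      (φ {u, v}, φ {v, w}, φ {u, w}) ∈ P

/-- Delete a set of edges from a 3-graph. -/
def ThreeGraph.deleteEdges (H : ThreeGraph) (R : Finset (Finset ℕ)) : ThreeGraph where
  verts := H.verts
  edges := H.edges \ R
  edge_sub := fun e he => H.edge_sub e (Finset.mem_sdiff.mp he).1
  edge_card := fun e he => H.edge_card e (Finset.mem_sdiff.mp he).1

/-- `H` α-almost satisfies `P`: one can remove at most `α·|V(H)|³` edges so that the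
resulting 3-graph satisfies `P`. -/
def AlmostSatisfies (H : ThreeGraph) (P : Palette) (α : ℝ) : Prop :=
  ∃ R ⊆ H.edges, (R.card : ℝ) ≤ α * (H.verts.card : ℝ) ^ 3 ∧
    Satisfies (H.deleteEdges R) P

/-- The Lagrange polynomial `λ_F(x) = 3! Σ_{e ∈ E(F)} Π_{v ∈ e} x_v` of a 3-graph. -/
def lagrangePoly (F : ThreeGraph) (x : ℕ → ℝ) : ℝ :=
  6 * ∑ e ∈ F.edges, ∏ v ∈ e, x v

/-- The Lagrangian `Λ_F` of a 3-graph: the supremum of the Lagrange polynomial over the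
standard simplex on the vertices. -/
def lagrangian (F : ThreeGraph) : ℝ :=
  sSup {l : ℝ | ∃ x : ℕ → ℝ, (∀ v ∈ F.verts, 0 ≤ x v ∧ x v ≤ 1) ∧
    (∑ v ∈ F.verts, x v = 1) ∧ l = lagrangePoly F x}

end

/-! ### The hereditary class and its forbidden family -/

noncomputable section

open scoped Classical in
/-- The indicator function of a relation, with real values. -/
def relInd (G : ℕ → ℕ → Prop) (u v : ℕ) : ℝ := if G u v then 1 else 0

/-- The indicator of the pattern allowed below an apex `z`: the pair `x, y` is joined, and
`z` is not joined to both of them. -/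
def patt (G : ℕ → ℕ → Prop) (x y z : ℕ) : ℝ :=
  relInd G x y * (1 - relInd G x z * relInd G y z)

/-- The class of 3-graphs `H` for which there are a rank function `r` and a graph `G` such that each
edge has a vertex `w` of strictly largest rank (its apex), the other two vertices are joined in `G`,
and `w` is not joined to both of them. Ranks may be tied, and `G` is a symmetric relation on `ℕ`
with loops allowed. -/
def Cls (H : ThreeGraph) : Prop :=
  ∃ (r : ℕ → ℕ) (G : ℕ → ℕ → Prop), (∀ u v, G u v → G v u) ∧
    ∀ e ∈ H.edges, ∃ u v w, e = {u, v, w} ∧ r u < r w ∧ r v < r w ∧ G u v ∧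
      ¬ (G u w ∧ G v w)

/-- The density `2 / (3 √3)`, the maximum of `x - x ^ 3` on `[0, 1]`. -/
def qval : ℝ := 2 / 9 * √3

lemma relInd_nonneg (G : ℕ → ℕ → Prop) (u v : ℕ) : 0 ≤ relInd G u v := by
  unfold relInd; split_ifs <;> norm_num

lemma relInd_le_one (G : ℕ → ℕ → Prop) (u v : ℕ) : relInd G u v ≤ 1 := by
  unfold relInd; split_ifs <;> norm_num

lemma relInd_symm {G : ℕ → ℕ → Prop} (hG : ∀ u v, G u v → G v u) (u v : ℕ) :
    relInd G u v = relInd G v u := by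
  unfold relInd; rw [propext ⟨hG u v, hG v u⟩]

lemma patt_nonneg (G : ℕ → ℕ → Prop) (x y z : ℕ) : 0 ≤ patt G x y z := by
  unfold patt relInd; split_ifs <;> norm_num

lemma patt_le_one (G : ℕ → ℕ → Prop) (x y z : ℕ) : patt G x y z ≤ 1 := by
  unfold patt relInd; split_ifs <;> norm_num

lemma irrational_qval : Irrational qval := by
  have h : Irrational (√3) := by
    have := Nat.Prime.irrational_sqrt (p := 3) (by norm_num)
    exact_mod_cast this
  have := h.ratCast_mul (q := 2 / 9) (by norm_num)
  unfold qval
  convert this using 2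
  norm_num

/-- The factorisation of `qval - (x - x ^ 3)` at its double root `1 / √3 = √3 / 3`. -/
lemma qval_sub (x : ℝ) : qval - (x - x ^ 3) = (x - √3 / 3) ^ 2 * (x + 2 * (√3 / 3)) := by
  have h : √3 ^ 2 = 3 := Real.sq_sqrt (by norm_num)
  have h3 : √3 ^ 3 = 3 * √3 := by rw [pow_succ, h]
  unfold qval
  ring_nf
  rw [h3, h]; ring

lemma cubic_le_qval {x : ℝ} (hx : 0 ≤ x) : x - x ^ 3 ≤ qval := by
  have := qval_sub x
  have h2 : 0 ≤ (x - √3 / 3) ^ 2 * (x + 2 * (√3 / 3)) := by positivity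
  linarith

lemma qval_nonneg : 0 ≤ qval := by unfold qval; positivity

lemma qval_le_one : qval ≤ 1 := by
  have : √3 ≤ 2 := by rw [Real.sqrt_le_left (by norm_num)]; norm_num
  unfold qval; linarith

/-- The class is closed under subhypergraphs: pull `r` and `G` back along the embedding. -/
lemma Cls.of_sub {F H : ThreeGraph} (hH : Cls H) (hs : IsSubhypergraph F H) : Cls F := by
  obtain ⟨r, G, hsym, hE⟩ := hH
  obtain ⟨f, hinj, -, hfe⟩ := hs
  refine ⟨fun v => r (f v), fun u v => G (f u) (f v), fun u v => hsym _ _, fun e he => ?_⟩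
  obtain ⟨u', v', w', heq, h1, h2, h3, h4⟩ := hE _ (hfe e he)
  have hu : u' ∈ e.image f := by rw [heq]; simp
  have hv : v' ∈ e.image f := by rw [heq]; simp
  have hw : w' ∈ e.image f := by rw [heq]; simp
  have hcard : (e.image f).card = 3 := H.edge_card _ (hfe e he)
  have huv : u' ≠ v' := by
    rintro rfl
    rw [heq] at hcard
    have : ({u', u', w'} : Finset ℕ).card ≤ 2 := by
      rw [Finset.insert_eq_of_mem (by simp)]; exact Finset.card_le_two
    omega
  rw [Finset.mem_image] at hu hv hw
  obtain ⟨u, hu, rfl⟩ := hu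
  obtain ⟨v, hv, rfl⟩ := hv
  obtain ⟨w, hw, rfl⟩ := hw
  refine ⟨u, v, w, ?_, h1, h2, h3, h4⟩
  symm
  apply Finset.eq_of_subset_of_card_le
  · intro a ha
    simp only [Finset.mem_insert, Finset.mem_singleton] at ha
    rcases ha with rfl | rfl | rfl <;> assumption
  · rw [F.edge_card e he, Finset.card_eq_three.mpr]
    refine ⟨u, v, w, ?_, ?_, ?_, rfl⟩
    · rintro rfl; exact huv rfl
    · rintro rfl; exact lt_irrefl _ h1
    · rintro rfl; exact lt_irrefl _ h2

/-- Avoiding every 3-graph outside the hereditary class `Cls` means lying in `Cls`. -/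
lemma avoids_iff (H : ThreeGraph) :
    (∀ F ∈ {F : ThreeGraph | ¬ Cls F}, ¬ IsSubhypergraph F H) ↔ Cls H := by
  constructor
  · intro h
    by_contra hc
    exact h H hc ⟨id, Set.injOn_id _, fun v hv => hv, fun e he => by simpa using he⟩
  · intro hH F hF hs
    exact hF (hH.of_sub hs)

/-! ### Pattern counts when all pairs of large sets are dense -/

/-- The number of pairs of `X × Y` joined by `G`. -/
def eG (G : ℕ → ℕ → Prop) (X Y : Finset ℕ) : ℝ := ∑ x ∈ X, ∑ y ∈ Y, relInd G x y

lemma eG_nonneg (G : ℕ → ℕ → Prop) (X Y : Finset ℕ) : 0 ≤ eG G X Y :=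
  Finset.sum_nonneg fun _ _ => Finset.sum_nonneg fun _ _ => relInd_nonneg _ _ _

lemma eG_le (G : ℕ → ℕ → Prop) (X Y : Finset ℕ) : eG G X Y ≤ X.card * Y.card := by
  have : eG G X Y ≤ ∑ x ∈ X, ∑ y ∈ Y, (1 : ℝ) :=
    Finset.sum_le_sum fun _ _ => Finset.sum_le_sum fun _ _ => relInd_le_one _ _ _
  simpa using this

lemma sum_relInd_eq_card (G : ℕ → ℕ → Prop) (X : Finset ℕ) (z : ℕ)
    [DecidablePred fun x => G x z] :
    ∑ x ∈ X, relInd G x z = ((X.filter fun x => G x z).card : ℝ) := by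
  rw [Finset.card_filter]; push_cast
  refine Finset.sum_congr rfl fun x _ => ?_
  unfold relInd; congr

/-- Counting patterns below a fixed apex `z`: all `G`-pairs minus those inside the
neighbourhood of `z`. -/
lemma sum_patt (G : ℕ → ℕ → Prop) [DecidableRel G] (X Y : Finset ℕ) (z : ℕ) :
    ∑ x ∈ X, ∑ y ∈ Y, patt G x y z =
      eG G X Y - eG G (X.filter fun x => G x z) (Y.filter fun y => G y z) := by
  unfold eG
  simp only [Finset.sum_filter]
  rw [← Finset.sum_sub_distrib]
  refine Finset.sum_congr rfl fun x _ => ?_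
  by_cases hx : G x z
  · simp only [hx, if_true]
    rw [← Finset.sum_sub_distrib]
    refine Finset.sum_congr rfl fun y _ => ?_
    by_cases hy : G y z <;> simp [patt, relInd, hx, hy]
  · simp [patt, relInd, hx]

/-- All pairs of large sets having density at least `m`, few vertices of `Z` have fewer than
`m |X|` neighbours in `X`. -/
lemma card_bad_lt (G : ℕ → ℕ → Prop) [DecidableRel G] {X Z U : Finset ℕ} {m s : ℝ}
    (hXU : X ⊆ U) (hZU : Z ⊆ U) (hs0 : 0 < s) (hsX : s ≤ X.card)
    (hlow : ∀ A B : Finset ℕ, A ⊆ U → B ⊆ U → s ≤ A.card → s ≤ B.card →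
      m * A.card * B.card ≤ eG G A B) :
    ((Z.filter fun z => ((X.filter fun x => G x z).card : ℝ) < m * X.card).card : ℝ) < s := by
  set C := Z.filter fun z => ((X.filter fun x => G x z).card : ℝ) < m * X.card with hC
  by_contra! hc
  have h1 := hlow X C hXU ((Finset.filter_subset _ _).trans hZU) hsX hc
  have h2 : eG G X C < ∑ z ∈ C, m * X.card := by
    unfold eG
    rw [Finset.sum_comm]
    apply Finset.sum_lt_sum_of_nonempty
    · rw [← Finset.card_pos]
      exact_mod_cast hs0.trans_le hc
    · intro z hz
      rw [sum_relInd_eq_card]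
      exact (Finset.mem_filter.mp hz).2
  rw [Finset.sum_const, nsmul_eq_mul] at h2
  nlinarith

/-- If `X, Y` has density at most `m + ε`, while all pairs of large sets have density at least
`m`, then almost all `z ∈ Z` have `m`-large neighbourhoods in `X` and `Y`, which themselves span many
`G`-pairs. The pattern density over `X, Y, Z` is thus at most `m - m ^ 3` up to `O(ε)`, and
`m - m ^ 3 ≤ qval`. -/
lemma patt_upper (G : ℕ → ℕ → Prop) {X Y Z U : Finset ℕ} {m s ε : ℝ} (hε : 0 < ε) (hε1 : ε ≤ 1)
    (hm : m ≤ 1) (hXU : X ⊆ U) (hYU : Y ⊆ U) (hZU : Z ⊆ U) (hs0 : 0 < s)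
    (hsX : s ≤ ε * X.card) (hsY : s ≤ ε * Y.card) (hsZ : s ≤ ε * Z.card)
    (hXY : eG G X Y ≤ (m + ε) * X.card * Y.card)
    (hlow : ∀ A B : Finset ℕ, A ⊆ U → B ⊆ U → s ≤ A.card → s ≤ B.card →
      m * A.card * B.card ≤ eG G A B) :
    ∑ z ∈ Z, ∑ x ∈ X, ∑ y ∈ Y, patt G x y z ≤
      (qval + 4 * ε) * X.card * Y.card * Z.card := by
  classical
  have hq := qval_nonneg
  have hX0 : (0 : ℝ) ≤ X.card := Nat.cast_nonneg _
  have hY0 : (0 : ℝ) ≤ Y.card := Nat.cast_nonneg _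
  have hZ0 : (0 : ℝ) ≤ Z.card := Nat.cast_nonneg _
  have hXY0 : (0 : ℝ) ≤ X.card * Y.card := by positivity
  have hXYZ0 : (0 : ℝ) ≤ X.card * Y.card * Z.card := by positivity
  simp only [sum_patt]
  rcases lt_or_ge m ε with hmε | hmε
  -- very sparse pairs: the pair density alone is small enough
  · have h1 : ∑ z ∈ Z, (eG G X Y - eG G (X.filter fun x => G x z) (Y.filter fun y => G y z))
        ≤ ∑ z ∈ Z, (2 * ε) * (X.card * Y.card) := by
      refine Finset.sum_le_sum fun z _ => ?_
      have := eG_nonneg G (X.filter fun x => G x z) (Y.filter fun y => G y z)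
      nlinarith
    rw [Finset.sum_const, nsmul_eq_mul] at h1
    nlinarith [mul_nonneg hq hXYZ0, mul_nonneg hε.le hXYZ0]
  · have hm0 : 0 < m := hε.trans_le hmε
    have hsX' : s ≤ X.card := hsX.trans (by nlinarith)
    have hsY' : s ≤ Y.card := hsY.trans (by nlinarith)
    set Z1 := Z.filter fun z => ((X.filter fun x => G x z).card : ℝ) < m * X.card with hZ1
    set Z2 := Z.filter fun z => ((Y.filter fun x => G x z).card : ℝ) < m * Y.card with hZ2
    have hb1 : (Z1.card : ℝ) < s := card_bad_lt G hXU hZU hs0 hsX' hlow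
    have hb2 : (Z2.card : ℝ) < s := card_bad_lt G hYU hZU hs0 hsY' hlow
    have hpt : ∀ z ∈ Z, eG G X Y - eG G (X.filter fun x => G x z) (Y.filter fun y => G y z) ≤
        (m + ε - m ^ 3) * (X.card * Y.card) +
          ((if ((X.filter fun x => G x z).card : ℝ) < m * X.card then (X.card * Y.card : ℝ) else 0) +
           (if ((Y.filter fun x => G x z).card : ℝ) < m * Y.card then (X.card * Y.card : ℝ) else 0)) := by
      intro z _
      have hm3 : m ^ 3 ≤ 1 := pow_le_one₀ hm0.le hm
      by_cases c : ((X.filter fun x => G x z).card : ℝ) < m * X.card ∨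
          ((Y.filter fun x => G x z).card : ℝ) < m * Y.card
      · have h0 := eG_nonneg G (X.filter fun x => G x z) (Y.filter fun y => G y z)
        have : (X.card * Y.card : ℝ) ≤
          ((if ((X.filter fun x => G x z).card : ℝ) < m * X.card then (X.card * Y.card : ℝ) else 0) +
           (if ((Y.filter fun x => G x z).card : ℝ) < m * Y.card then (X.card * Y.card : ℝ) else 0)) := by
          split_ifs <;> first | linarith | exact absurd c (by tauto)
        nlinarith
      · push Not at c
        obtain ⟨c1, c2⟩ := c
        rw [if_neg (not_lt.mpr c1), if_neg (not_lt.mpr c2)]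
        have h1 := hlow _ _ ((Finset.filter_subset (fun x => G x z) X).trans hXU)
          ((Finset.filter_subset (fun x => G x z) Y).trans hYU)
          (by nlinarith) (by nlinarith)
        have h2 : (m * X.card) * (m * Y.card) ≤
            ((X.filter fun x => G x z).card : ℝ) * ((Y.filter fun x => G x z).card : ℝ) :=
          mul_le_mul c1 c2 (by positivity) (by positivity)
        have h3 := mul_le_mul_of_nonneg_left h2 hm0.le
        nlinarith
    refine (Finset.sum_le_sum hpt).trans ?_
    rw [Finset.sum_add_distrib, Finset.sum_add_distrib, Finset.sum_const, nsmul_eq_mul,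
      ← Finset.sum_filter, ← Finset.sum_filter, Finset.sum_const, Finset.sum_const,
      nsmul_eq_mul, nsmul_eq_mul, ← hZ1, ← hZ2]
    have hc := cubic_le_qval hm0.le
    have e1 : (Z1.card : ℝ) * (X.card * Y.card) ≤ ε * Z.card * (X.card * Y.card) := by
      gcongr; linarith
    have e2 : (Z2.card : ℝ) * (X.card * Y.card) ≤ ε * Z.card * (X.card * Y.card) := by
      gcongr; linarith
    have e3 : (m - m ^ 3) * (X.card * Y.card * Z.card) ≤ qval * (X.card * Y.card * Z.card) := by
      gcongr
    nlinarith [mul_nonneg hε.le hXYZ0]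

/-! ### The upper bound: a chain of initial segments of the ranking -/

/-- A rank function can be refined to one whose initial segments in `V` have all sizes. -/
lemma exists_rank (V : Finset ℕ) (r : ℕ → ℕ) :
    ∃ ρ : ℕ → ℕ, (∀ u ∈ V, ∀ v ∈ V, r u < r v → ρ u < ρ v) ∧
      ∀ t ≤ V.card, (V.filter fun v => ρ v < t).card = t := by
  classical
  set B := V.sup id with hB
  have hle : ∀ v ∈ V, v ≤ B := fun v hv => Finset.le_sup (f := id) hv
  -- ties are broken by the vertex labels
  set r' : ℕ → ℕ := fun v => r v * (B + 1) + v with hr'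
  have hmono : ∀ u ∈ V, ∀ v ∈ V, r u < r v → r' u < r' v := by
    intro u hu v _ h
    have := hle u hu
    simp only [hr']
    have : (r u + 1) * (B + 1) ≤ r v * (B + 1) := Nat.mul_le_mul_right _ h
    nlinarith
  have hinj : ∀ u ∈ V, ∀ v ∈ V, r' u = r' v → u = v := by
    intro u hu v hv h
    rcases lt_trichotomy (r u) (r v) with h1 | h1 | h1
    · exact absurd h (hmono u hu v hv h1).ne
    · simp only [hr', h1] at h; omega
    · exact absurd h (hmono v hv u hu h1).ne'
  set ρ : ℕ → ℕ := fun v => (V.filter fun u => r' u < r' v).card with hρ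
  have hρm : ∀ u ∈ V, ∀ v ∈ V, r' u < r' v → ρ u < ρ v := by
    intro u hu v _ h
    apply Finset.card_lt_card
    rw [Finset.ssubset_iff_of_subset]
    · exact ⟨u, by simp [hu, h], by simp⟩
    · intro a ha
      simp only [Finset.mem_filter] at ha ⊢
      exact ⟨ha.1, ha.2.trans h⟩
  have hρinj : Set.InjOn ρ V := by
    intro u hu v hv h
    rcases lt_trichotomy (r' u) (r' v) with h1 | h1 | h1
    · exact absurd h (hρm u hu v hv h1).ne
    · exact hinj u hu v hv h1
    · exact absurd h (hρm v hv u hu h1).ne'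
  have himg : V.image ρ = Finset.range V.card := by
    apply Finset.eq_of_subset_of_card_le
    · intro a ha
      obtain ⟨v, hv, rfl⟩ := Finset.mem_image.mp ha
      rw [Finset.mem_range]
      apply Finset.card_lt_card
      rw [Finset.ssubset_iff_of_subset (Finset.filter_subset _ _)]
      exact ⟨v, hv, by simp⟩
    · rw [Finset.card_image_of_injOn hρinj, Finset.card_range]
  refine ⟨ρ, fun u hu v hv h => hρm u hu v hv (hmono u hu v hv h), fun t ht => ?_⟩
  have h1 : (V.filter fun v => ρ v < t).image ρ = Finset.range t := by
    ext a
    simp only [Finset.mem_image, Finset.mem_filter, Finset.mem_range]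
    constructor
    · rintro ⟨v, ⟨_, h⟩, rfl⟩; exact h
    · intro h
      have : a ∈ V.image ρ := by rw [himg, Finset.mem_range]; omega
      obtain ⟨v, hv, rfl⟩ := Finset.mem_image.mp this
      exact ⟨v, ⟨hv, h⟩, rfl⟩
  have h2 := Finset.card_image_of_injOn (s := V.filter fun v => ρ v < t)
    (hρinj.mono (by intro x hx; exact (Finset.mem_filter.mp hx).1))
  rw [← h2, h1, Finset.card_range]

/-- When every vertex of `Z` outranks `X` and `Y`, all edges on `X × Y × Z` have their apex
in `Z`. -/
lemma eVVV_le_patt {H : ThreeGraph} {ρ : ℕ → ℕ} {G : ℕ → ℕ → Prop}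
    (hG : ∀ u v, G u v → G v u)
    (hE : ∀ e ∈ H.edges, ∃ u v w, e = {u, v, w} ∧ ρ u < ρ w ∧ ρ v < ρ w ∧ G u v ∧
      ¬ (G u w ∧ G v w))
    {X Y Z : Finset ℕ} (hXZ : ∀ x ∈ X, ∀ z ∈ Z, ρ x < ρ z) (hYZ : ∀ y ∈ Y, ∀ z ∈ Z, ρ y < ρ z) :
    (eVVV H X Y Z : ℝ) ≤ ∑ z ∈ Z, ∑ x ∈ X, ∑ y ∈ Y, patt G x y z := by
  classical
  have h1 : (eVVV H X Y Z : ℝ) = ∑ x ∈ X, ∑ y ∈ Y, ∑ z ∈ Z,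
      if ({x, y, z} : Finset ℕ) ∈ H.edges then (1 : ℝ) else 0 := by
    unfold eVVV
    rw [Finset.card_filter, Finset.sum_product]
    push_cast
    refine Finset.sum_congr rfl fun x _ => ?_
    rw [Finset.sum_product]
  have h2 : ∑ z ∈ Z, ∑ x ∈ X, ∑ y ∈ Y, patt G x y z =
      ∑ x ∈ X, ∑ y ∈ Y, ∑ z ∈ Z, patt G x y z := by
    rw [Finset.sum_comm]
    exact Finset.sum_congr rfl fun x _ => Finset.sum_comm
  rw [h1, h2]
  refine Finset.sum_le_sum fun x hx => Finset.sum_le_sum fun y hy =>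
    Finset.sum_le_sum fun z hz => ?_
  split_ifs with he
  · obtain ⟨u, v, w, heq, huw, hvw, hg, hn⟩ := hE _ he
    have hxz := hXZ x hx z hz
    have hyz := hYZ y hy z hz
    have hcard := H.edge_card _ he
    have huv : u ≠ v := by
      rintro rfl
      rw [heq] at hcard
      have : ({u, u, w} : Finset ℕ).card ≤ 2 := by
        rw [Finset.insert_eq_of_mem (by simp)]; exact Finset.card_le_two
      omega
    have hu : u ∈ ({x, y, z} : Finset ℕ) := by rw [heq]; simp
    have hv : v ∈ ({x, y, z} : Finset ℕ) := by rw [heq]; simp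
    have hw : w ∈ ({x, y, z} : Finset ℕ) := by rw [heq]; simp
    have hz' : z ∈ ({u, v, w} : Finset ℕ) := by rw [← heq]; simp
    simp only [Finset.mem_insert, Finset.mem_singleton] at hu hv hw hz'
    have hwz : w = z := by
      rcases hw with rfl | rfl | rfl
      · rcases hz' with rfl | rfl | rfl <;> omega
      · rcases hz' with rfl | rfl | rfl <;> omega
      · rfl
    subst hwz
    have hu' : u = x ∨ u = y := by
      rcases hu with h | h | rfl
      · exact Or.inl h
      · exact Or.inr h
      · exact absurd huw (lt_irrefl _)
    have hv' : v = x ∨ v = y := by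
      rcases hv with h | h | rfl
      · exact Or.inl h
      · exact Or.inr h
      · exact absurd hvw (lt_irrefl _)
    have key : G x y ∧ ¬ (G x w ∧ G y w) := by
      rcases hu' with rfl | rfl <;> rcases hv' with rfl | rfl
      · exact absurd rfl huv
      · exact ⟨hg, hn⟩
      · exact ⟨hG _ _ hg, fun h => hn ⟨h.2, h.1⟩⟩
      · exact absurd rfl huv
    have : patt G x y w = 1 := by
      unfold patt relInd
      by_cases a : G x w <;> by_cases b : G y w <;> simp_all
    rw [this]
  · exact patt_nonneg _ _ _ _

/-- The chain argument: prefixes `U k` of the vertex ranking have `(k + 1) b` vertices.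
Some `k` admits a pair `X, Y` inside `U k` of density at most `1 - k ε` with no pair of large sets
inside `U (k + 1)` of density below `1 - (k + 1) ε`. Taking for `Z` the vertices of `U (k + 1)`
outside `U k`, which outrank `U k`, the edges on `X × Y × Z` are bounded by `patt_upper`. -/
lemma upper_aux {H : ThreeGraph} (hH : Cls H) {d η ε : ℝ} (hε : 0 < ε) (hε1 : ε ≤ 1) {K b : ℕ}
    (hK : 1 < K * ε) (hb : 0 < b) (hbN : (K + 1) * b ≤ H.verts.card)
    (hd : IsDenseVVV H d η) (hdq : qval + 4 * ε < d) :
    (d - (qval + 4 * ε)) * (ε ^ K * b) ^ 3 ≤ η * (H.verts.card : ℝ) ^ 3 := by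
  classical
  obtain ⟨r, G, hG, hE0⟩ := hH
  obtain ⟨ρ, hρ, hpre⟩ := exists_rank H.verts r
  have hE : ∀ e ∈ H.edges, ∃ u v w, e = {u, v, w} ∧ ρ u < ρ w ∧ ρ v < ρ w ∧ G u v ∧
      ¬ (G u w ∧ G v w) := by
    intro e he
    obtain ⟨u, v, w, heq, h1, h2, h3, h4⟩ := hE0 e he
    have hs := H.edge_sub e he
    rw [heq] at hs
    have hu : u ∈ H.verts := hs (by simp)
    have hv : v ∈ H.verts := hs (by simp)
    have hw : w ∈ H.verts := hs (by simp)
    exact ⟨u, v, w, heq, hρ u hu w hw h1, hρ v hv w hw h2, h3, h4⟩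
  have hbR : (0 : ℝ) < b := by exact_mod_cast hb
  set U : ℕ → Finset ℕ := fun k => H.verts.filter fun v => ρ v < (k + 1) * b with hU
  have hUcard : ∀ k ≤ K, (U k).card = (k + 1) * b := fun k hk =>
    hpre _ ((Nat.mul_le_mul_right b (by omega)).trans hbN)
  have hUmono : ∀ k, U k ⊆ U (k + 1) := by
    intro k v hv
    simp only [hU, Finset.mem_filter] at hv ⊢
    exact ⟨hv.1, hv.2.trans_le (Nat.mul_le_mul_right b (by omega))⟩
  have hUV : ∀ k, U k ⊆ H.verts := fun k => Finset.filter_subset _ _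
  let P : ℕ → Prop := fun k => ∃ X Y : Finset ℕ, X ⊆ U k ∧ Y ⊆ U k ∧
    ε ^ k * b ≤ X.card ∧ ε ^ k * b ≤ Y.card ∧ eG G X Y ≤ (1 - k * ε) * X.card * Y.card
  have hP0 : P 0 := by
    have h0 : ε ^ 0 * (b : ℝ) ≤ (U 0).card := by rw [hUcard 0 (Nat.zero_le _)]; simp
    refine ⟨U 0, U 0, subset_rfl, subset_rfl, h0, h0, ?_⟩
    simpa using eG_le G (U 0) (U 0)
  have hPK : ¬ P K := by
    rintro ⟨X, Y, -, -, hX, hY, h⟩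
    have hs : 0 < ε ^ K * b := by positivity
    have h0 := eG_nonneg G X Y
    have : (0 : ℝ) < X.card * Y.card := mul_pos (hs.trans_le hX) (hs.trans_le hY)
    nlinarith
  obtain ⟨k, hkK, hPk, hPk1⟩ : ∃ k < K, P k ∧ ¬ P (k + 1) := by
    by_contra! hcon
    have : ∀ k ≤ K, P k := by
      intro k
      induction k with
      | zero => exact fun _ => hP0
      | succ k ih => exact fun hk => hcon k (by omega) (ih (by omega))
    exact hPK (this K le_rfl)
  obtain ⟨X, Y, hXU, hYU, hX, hY, hXY⟩ := hPk
  set Z := U (k + 1) \ U k with hZ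
  have hZcard : Z.card = b := by
    rw [hZ, Finset.card_sdiff_of_subset (hUmono k), hUcard k (by omega), hUcard (k + 1) (by omega)]
    have : (k + 1 + 1) * b = (k + 1) * b + b := by ring
    omega
  have hlast : ∀ x ∈ U k, ∀ z ∈ Z, ρ x < ρ z := by
    intro x hx z hz
    simp only [hZ, hU, Finset.mem_sdiff, Finset.mem_filter, not_and, not_lt] at hx hz
    exact hx.2.trans_le (hz.2 hz.1.1)
  have hs0 : 0 < ε ^ (k + 1) * b := by positivity
  have hlow : ∀ A B : Finset ℕ, A ⊆ U (k + 1) → B ⊆ U (k + 1) → ε ^ (k + 1) * b ≤ A.card →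
      ε ^ (k + 1) * b ≤ B.card → (1 - (k + 1) * ε) * A.card * B.card ≤ eG G A B := by
    intro A B hA hB hsA hsB
    by_contra! hc
    refine hPk1 ⟨A, B, hA, hB, hsA, hsB, ?_⟩
    push_cast
    exact hc.le
  have hεk : ε ^ k ≤ 1 := pow_le_one₀ hε.le hε1
  have hup := patt_upper G (X := X) (Y := Y) (Z := Z) (U := U (k + 1)) (m := 1 - (k + 1) * ε)
    (s := ε ^ (k + 1) * b) hε hε1 (by have : 0 ≤ (k + 1 : ℝ) * ε := by positivity
                                      linarith)
    (hXU.trans (hUmono k)) (hYU.trans (hUmono k)) Finset.sdiff_subset hs0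
    (by rw [pow_succ']; nlinarith) (by rw [pow_succ']; nlinarith)
    (by rw [pow_succ', hZcard]; nlinarith [mul_pos hε hbR])
    (by convert hXY using 3; ring) hlow
  have h1 := eVVV_le_patt hG hE (fun x hx z hz => hlast x (hXU hx) z hz)
    (fun y hy z hz => hlast y (hYU hy) z hz)
  have h2 := hd X Y Z (hXU.trans (hUV k)) (hYU.trans (hUV k))
    (Finset.sdiff_subset.trans (hUV _))
  have hKk : ε ^ K ≤ ε ^ k := pow_le_pow_of_le_one hε.le hε1 hkK.le
  have hsK : ε ^ K * b ≤ ε ^ k * b := mul_le_mul_of_nonneg_right hKk hbR.le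
  have hpos : 0 ≤ ε ^ K * b := by positivity
  have hZ' : ε ^ K * b ≤ Z.card := by
    rw [hZcard]; nlinarith
  have h3 : (ε ^ K * b) ^ 3 ≤ X.card * Y.card * Z.card := by
    have : (ε ^ K * b) ^ 3 = (ε ^ K * b) * (ε ^ K * b) * (ε ^ K * b) := by ring
    rw [this]
    have hx := hsK.trans hX
    have hy := hsK.trans hY
    gcongr
  have h4 := mul_le_mul_of_nonneg_left h3 (sub_pos.mpr hdq).le
  nlinarith

/-- No density above `qval` is attainable in the class: `upper_aux` with `ε = (d - qval) / 8`
is violated once `η` is small compared with `ε ^ (3 K) / K ^ 3`. -/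
lemma upper_bound {d : ℝ}
    (h : ∀ η : ℝ, 0 < η → ∀ n : ℕ, ∃ H : ThreeGraph, n ≤ H.verts.card ∧ Cls H ∧
      IsDenseVVV H d η) (hd1 : d ≤ 1) : d ≤ qval := by
  by_contra! hlt
  set ε := (d - qval) / 8 with hεd
  have hε : 0 < ε := by rw [hεd]; linarith
  have hε1 : ε ≤ 1 := by have := qval_nonneg; rw [hεd]; linarith
  obtain ⟨K, hK⟩ := exists_nat_gt (1 / ε)
  rw [div_lt_iff₀ hε] at hK
  set c : ℝ := ε ^ K / (2 * (K + 1)) with hc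
  have hc0 : 0 < c := by positivity
  obtain ⟨H, hn, hH, hdense⟩ := h (2 * ε * c ^ 3) (by positivity) (K + 1)
  set N := H.verts.card with hN
  set b := N / (K + 1) with hb
  have hb1 : 1 ≤ b := (Nat.one_le_div_iff (by omega)).mpr hn
  have hbN : (K + 1) * b ≤ N := Nat.mul_div_le _ _
  have hNb : N ≤ 2 * (K + 1) * b := by
    have := Nat.lt_mul_div_succ N (show 0 < K + 1 by omega)
    rw [← hb] at this
    nlinarith
  have key := upper_aux hH hε hε1 hK hb1 hbN hdense (by rw [hεd]; linarith)
  have h1 : c * N ≤ ε ^ K * b := by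
    have : (N : ℝ) ≤ 2 * (K + 1) * b := by exact_mod_cast hNb
    rw [hc, div_mul_eq_mul_div, div_le_iff₀ (by positivity)]
    have := mul_le_mul_of_nonneg_left this (pow_pos hε K).le
    linarith
  have hNpos : (0 : ℝ) < N := by
    have : 0 < N := by omega
    exact_mod_cast this
  have h2 : (c * N) ^ 3 ≤ (ε ^ K * b) ^ 3 := by gcongr
  have h3 : 0 < (c * N) ^ 3 := by positivity
  have h4 : d - (qval + 4 * ε) = 4 * ε := by rw [hεd]; ring
  rw [h4, ← hN] at key
  have h5 : 2 * ε * c ^ 3 * (N : ℝ) ^ 3 = 2 * ε * (c * N) ^ 3 := by ring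
  rw [h5] at key
  nlinarith [mul_pos hε h3]

/-! ### Counting patterns in quasirandom graphs -/

/-- The deviation of `G` from density `α` at a pair. -/
def dev (G : ℕ → ℕ → Prop) (α : ℝ) (u v : ℕ) : ℝ := relInd G u v - α

/-- Small total codegree correlation forces all sets to see almost all vertices with the right
degree, by Cauchy–Schwarz. -/
lemma sum_abs_dev_le {G : ℕ → ℕ → Prop} {α Q : ℝ} {V : Finset ℕ}
    (hQ : ∑ x ∈ V, ∑ x' ∈ V, |∑ z ∈ V, dev G α x z * dev G α x' z| ≤ Q)
    {A : Finset ℕ} (hA : A ⊆ V) :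
    ∑ z ∈ V, |∑ x ∈ A, dev G α x z| ≤ √(V.card * Q) := by
  apply Real.le_sqrt_of_sq_le
  refine (sq_sum_le_card_mul_sum_sq).trans ?_
  refine mul_le_mul_of_nonneg_left ?_ (Nat.cast_nonneg _)
  calc ∑ z ∈ V, |∑ x ∈ A, dev G α x z| ^ 2
      = ∑ z ∈ V, ∑ x ∈ A, ∑ x' ∈ A, dev G α x z * dev G α x' z := by
        refine Finset.sum_congr rfl fun z _ => ?_
        rw [sq_abs, sq, Finset.sum_mul_sum]
    _ = ∑ x ∈ A, ∑ x' ∈ A, ∑ z ∈ V, dev G α x z * dev G α x' z := by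
        rw [Finset.sum_comm]
        exact Finset.sum_congr rfl fun x _ => Finset.sum_comm
    _ ≤ ∑ x ∈ A, ∑ x' ∈ A, |∑ z ∈ V, dev G α x z * dev G α x' z| :=
        Finset.sum_le_sum fun _ _ => Finset.sum_le_sum fun _ _ => le_abs_self _
    _ ≤ ∑ x ∈ V, ∑ x' ∈ V, |∑ z ∈ V, dev G α x z * dev G α x' z| := by
        refine (Finset.sum_le_sum fun x _ => Finset.sum_le_sum_of_subset_of_nonneg hA
          fun _ _ _ => abs_nonneg _).trans ?_
        exact Finset.sum_le_sum_of_subset_of_nonneg hA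
          fun _ _ _ => Finset.sum_nonneg fun _ _ => abs_nonneg _
    _ ≤ Q := hQ

/-- Small cut norm: all pairs of sets have density close to `α`. -/
lemma abs_eG_sub_le {G : ℕ → ℕ → Prop} {α D : ℝ} {V : Finset ℕ}
    (hD : ∀ A ⊆ V, ∑ z ∈ V, |∑ x ∈ A, dev G α x z| ≤ D) {A B : Finset ℕ} (hA : A ⊆ V)
    (hB : B ⊆ V) : |eG G A B - α * A.card * B.card| ≤ D := by
  have h1 : eG G A B - α * A.card * B.card = ∑ z ∈ B, ∑ x ∈ A, dev G α x z := by
    unfold eG dev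
    rw [Finset.sum_comm]
    simp only [Finset.sum_sub_distrib, Finset.sum_const, nsmul_eq_mul]
    ring
  rw [h1]
  calc |∑ z ∈ B, ∑ x ∈ A, dev G α x z| ≤ ∑ z ∈ B, |∑ x ∈ A, dev G α x z| :=
        Finset.abs_sum_le_sum_abs _ _
    _ ≤ ∑ z ∈ V, |∑ x ∈ A, dev G α x z| :=
        Finset.sum_le_sum_of_subset_of_nonneg hB fun _ _ _ => abs_nonneg _
    _ ≤ D := hD A hA

/-- Pattern count below a fixed apex `z` in a quasirandom graph of density `α`. -/
lemma sum_patt_ge {G : ℕ → ℕ → Prop} {α D : ℝ} {V : Finset ℕ} (hα0 : 0 ≤ α) (hα1 : α ≤ 1)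
    (hD : ∀ A ⊆ V, ∑ z ∈ V, |∑ x ∈ A, dev G α x z| ≤ D) {A B : Finset ℕ} (hA : A ⊆ V)
    (hB : B ⊆ V) (z : ℕ) :
    (α - α ^ 3) * (A.card * B.card) - 2 * D -
      V.card * (|∑ x ∈ A, dev G α x z| + |∑ y ∈ B, dev G α y z|) ≤
      ∑ x ∈ A, ∑ y ∈ B, patt G x y z := by
  classical
  rw [sum_patt]
  set A' := A.filter fun x => G x z with hA'
  set B' := B.filter fun x => G x z with hB'
  have h1 := (abs_le.mp (abs_eG_sub_le hD hA hB)).1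
  have h2 := (abs_le.mp (abs_eG_sub_le hD ((Finset.filter_subset _ _).trans hA : A' ⊆ V)
    ((Finset.filter_subset _ _).trans hB : B' ⊆ V))).2
  have hdA : (A'.card : ℝ) = α * A.card + ∑ x ∈ A, dev G α x z := by
    rw [hA', ← sum_relInd_eq_card]
    unfold dev
    rw [Finset.sum_sub_distrib, Finset.sum_const, nsmul_eq_mul]; ring
  have hdB : (B'.card : ℝ) = α * B.card + ∑ x ∈ B, dev G α x z := by
    rw [hB', ← sum_relInd_eq_card]
    unfold dev
    rw [Finset.sum_sub_distrib, Finset.sum_const, nsmul_eq_mul]; ring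
  set a := ∑ x ∈ A, dev G α x z
  set c := ∑ x ∈ B, dev G α x z
  have hAV : (A.card : ℝ) ≤ V.card := by exact_mod_cast Finset.card_le_card hA
  have hBV : (B'.card : ℝ) ≤ V.card := by
    exact_mod_cast Finset.card_le_card ((Finset.filter_subset _ _).trans hB)
  have hA0 : (0 : ℝ) ≤ A.card := Nat.cast_nonneg _
  have hB0 : (0 : ℝ) ≤ B'.card := Nat.cast_nonneg _
  have h3 : (A'.card : ℝ) * B'.card ≤
      α ^ 2 * (A.card * B.card) + V.card * (|a| + |c|) := by
    have e1 : (A'.card : ℝ) * B'.card = α ^ 2 * (A.card * B.card) + α * A.card * c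
        + a * B'.card := by
      rw [hdA]
      have : α * (A.card : ℝ) * B'.card = α * A.card * (α * B.card + c) := by rw [hdB]
      linear_combination this
    have e2 : α * A.card * c ≤ V.card * |c| := by
      have : α * A.card ≤ V.card := by nlinarith
      calc α * A.card * c ≤ α * A.card * |c| :=
            mul_le_mul_of_nonneg_left (le_abs_self _) (by positivity)
        _ ≤ V.card * |c| := mul_le_mul_of_nonneg_right this (abs_nonneg _)
    have e3 : a * B'.card ≤ V.card * |a| := by
      calc a * B'.card ≤ |a| * B'.card := mul_le_mul_of_nonneg_right (le_abs_self _) hB0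
        _ ≤ |a| * V.card := mul_le_mul_of_nonneg_left hBV (abs_nonneg _)
        _ = V.card * |a| := mul_comm _ _
    linarith
  have hP : 0 ≤ (V.card : ℝ) * (|a| + |c|) := by positivity
  have h4 := mul_le_mul_of_nonneg_left h3 hα0
  have h5 : α * ((V.card : ℝ) * (|a| + |c|)) ≤ V.card * (|a| + |c|) := by nlinarith
  nlinarith

/-- The part of `X` of rank below that of `z`. -/
def below (r : ℕ → ℕ) (X : Finset ℕ) (z : ℕ) : Finset ℕ := X.filter fun x => r x < r z

/-- The set below `z` depends on `z` only through its rank, so the cut norm bound is applied once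
for each of the `M` ranks. -/
lemma sum_abs_below_le {G : ℕ → ℕ → Prop} {α D : ℝ} {V : Finset ℕ} {r : ℕ → ℕ} {M : ℕ}
    (hr : ∀ v ∈ V, r v < M) (hD : ∀ A ⊆ V, ∑ z ∈ V, |∑ x ∈ A, dev G α x z| ≤ D)
    {X Z : Finset ℕ} (hX : X ⊆ V) (hZ : Z ⊆ V) :
    ∑ z ∈ Z, |∑ x ∈ below r X z, dev G α x z| ≤ M * D := by
  calc ∑ z ∈ Z, |∑ x ∈ below r X z, dev G α x z|
      ≤ ∑ z ∈ V, |∑ x ∈ below r X z, dev G α x z| :=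
        Finset.sum_le_sum_of_subset_of_nonneg hZ fun _ _ _ => abs_nonneg _
    _ ≤ ∑ z ∈ V, ∑ t ∈ Finset.range M, |∑ x ∈ X.filter (fun x => r x < t), dev G α x z| := by
        refine Finset.sum_le_sum fun z hz => ?_
        exact Finset.single_le_sum
          (f := fun t => |∑ x ∈ X.filter (fun x => r x < t), dev G α x z|)
          (fun _ _ => abs_nonneg _) (Finset.mem_range.mpr (hr z hz))
    _ = ∑ t ∈ Finset.range M, ∑ z ∈ V, |∑ x ∈ X.filter (fun x => r x < t), dev G α x z| :=
        Finset.sum_comm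
    _ ≤ ∑ t ∈ Finset.range M, D :=
        Finset.sum_le_sum fun t _ => hD _ ((Finset.filter_subset _ _).trans hX)
    _ = M * D := by simp

/-- The indicator that `z` strictly outranks both `x` and `y`. -/
def topInd (r : ℕ → ℕ) (x y z : ℕ) : ℝ := if r x < r z ∧ r y < r z then 1 else 0

/-- Weighted pattern count with apex in the third set. -/
lemma top_count {G : ℕ → ℕ → Prop} {α D : ℝ} {V : Finset ℕ} {r : ℕ → ℕ} {M : ℕ} (hM : 1 ≤ M)
    (hα0 : 0 ≤ α) (hα1 : α ≤ 1) (hr : ∀ v ∈ V, r v < M)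
    (hD : ∀ A ⊆ V, ∑ z ∈ V, |∑ x ∈ A, dev G α x z| ≤ D) {X Y Z : Finset ℕ}
    (hX : X ⊆ V) (hY : Y ⊆ V) (hZ : Z ⊆ V) :
    (α - α ^ 3) * (∑ z ∈ Z, ∑ x ∈ X, ∑ y ∈ Y, topInd r x y z) - 4 * M * D * V.card ≤
      ∑ z ∈ Z, ∑ x ∈ X, ∑ y ∈ Y, topInd r x y z * patt G x y z := by
  classical
  have hD0 : 0 ≤ D := (Finset.sum_nonneg fun _ _ => abs_nonneg _).trans (hD ∅ (by simp))
  have hV0 : (0 : ℝ) ≤ V.card := Nat.cast_nonneg _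
  have hsum : ∀ (f : ℕ → ℕ → ℝ) (z : ℕ), ∑ x ∈ X, ∑ y ∈ Y, topInd r x y z * f x y =
      ∑ x ∈ below r X z, ∑ y ∈ below r Y z, f x y := by
    intro f z
    unfold below
    simp only [Finset.sum_filter]
    refine Finset.sum_congr rfl fun x _ => ?_
    by_cases hx : r x < r z
    · simp only [hx, if_true]
      refine Finset.sum_congr rfl fun y _ => ?_
      by_cases hy : r y < r z <;> simp [topInd, hx, hy]
    · simp [topInd, hx]
  have hcard : ∀ z, ∑ x ∈ X, ∑ y ∈ Y, topInd r x y z =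
      ((below r X z).card : ℝ) * (below r Y z).card := by
    intro z
    have := hsum (fun _ _ => 1) z
    simpa using this
  have h1 : ∀ z ∈ Z, (α - α ^ 3) * (((below r X z).card : ℝ) * (below r Y z).card) - 2 * D -
      V.card * (|∑ x ∈ below r X z, dev G α x z| + |∑ y ∈ below r Y z, dev G α y z|) ≤
      ∑ x ∈ X, ∑ y ∈ Y, topInd r x y z * patt G x y z := by
    intro z _
    rw [hsum (fun x y => patt G x y z) z]
    exact sum_patt_ge hα0 hα1 hD ((Finset.filter_subset _ _).trans hX)
      ((Finset.filter_subset _ _).trans hY) z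
  have h2 := Finset.sum_le_sum h1
  simp only [Finset.sum_sub_distrib, ← Finset.mul_sum, Finset.sum_add_distrib, Finset.sum_const,
    nsmul_eq_mul] at h2
  have hx := sum_abs_below_le hr hD hX hZ
  have hy := sum_abs_below_le hr hD hY hZ
  have hZV : (Z.card : ℝ) ≤ V.card := by exact_mod_cast Finset.card_le_card hZ
  have hM' : (1 : ℝ) ≤ M := by exact_mod_cast hM
  simp only [hcard]
  have e1 : (Z.card : ℝ) * (2 * D) ≤ 2 * M * D * V.card := by
    have : (Z.card : ℝ) * (2 * D) ≤ V.card * (2 * D) := by gcongr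
    have h' : (V.card : ℝ) * (2 * D) * 1 ≤ V.card * (2 * D) * M := by gcongr
    linarith
  have e2 := mul_le_mul_of_nonneg_left (add_le_add hx hy) hV0
  linarith

open scoped Classical in
/-- The 3-graph on `range N` with all edges allowed by the rank function `r` and the graph `G`. -/
def fullGraph (N : ℕ) (r : ℕ → ℕ) (G : ℕ → ℕ → Prop) : ThreeGraph where
  verts := Finset.range N
  edges := ((Finset.range N).powersetCard 3).filter fun e => ∃ u v w, e = {u, v, w} ∧
    r u < r w ∧ r v < r w ∧ G u v ∧ ¬ (G u w ∧ G v w)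
  edge_sub := fun _ he => (Finset.mem_powersetCard.mp (Finset.mem_filter.mp he).1).1
  edge_card := fun _ he => (Finset.mem_powersetCard.mp (Finset.mem_filter.mp he).1).2

open scoped Classical in
lemma fullGraph_cls (N : ℕ) (r : ℕ → ℕ) {G : ℕ → ℕ → Prop} (hG : ∀ u v, G u v → G v u) :
    Cls (fullGraph N r G) :=
  ⟨r, G, hG, fun _ he => (Finset.mem_filter.mp he).2⟩

/-- The indicator of equal rank. -/
def tie (r : ℕ → ℕ) (x y : ℕ) : ℝ := if r x = r y then 1 else 0

lemma tie_nonneg (r : ℕ → ℕ) (x y : ℕ) : 0 ≤ tie r x y := by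
  unfold tie; split_ifs <;> norm_num

open scoped Classical in
/-- Up to rank ties, every triple with a top vertex showing the pattern is an edge. -/
lemma edge_ge {N : ℕ} {r : ℕ → ℕ} {G : ℕ → ℕ → Prop} {x y z : ℕ} (hx : x < N) (hy : y < N)
    (hz : z < N) :
    topInd r x y z * patt G x y z + topInd r x z y * patt G x z y +
      topInd r y z x * patt G y z x - (tie r x y + tie r x z + tie r y z) ≤
    if ({x, y, z} : Finset ℕ) ∈ (fullGraph N r G).edges then (1 : ℝ) else 0 := by
  have t1 := tie_nonneg r x y
  have t2 := tie_nonneg r x z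
  have t3 := tie_nonneg r y z
  have hle : ∀ a b c : ℕ, topInd r a b c * patt G a b c ≤ topInd r a b c := fun a b c =>
    mul_le_of_le_one_right (by unfold topInd; split_ifs <;> norm_num) (patt_le_one _ _ _ _)
  have hone : topInd r x y z + topInd r x z y + topInd r y z x ≤ 1 := by
    unfold topInd; split_ifs <;> first | (exfalso; omega) | norm_num
  split_ifs with he
  · linarith [hle x y z, hle x z y, hle y z x]
  · by_cases hxy : r x = r y
    · have : tie r x y = 1 := by simp [tie, hxy]
      linarith [hle x y z, hle x z y, hle y z x]
    by_cases hxz : r x = r z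
    · have : tie r x z = 1 := by simp [tie, hxz]
      linarith [hle x y z, hle x z y, hle y z x]
    by_cases hyz : r y = r z
    · have : tie r y z = 1 := by simp [tie, hyz]
      linarith [hle x y z, hle x z y, hle y z x]
    have hmem : ({x, y, z} : Finset ℕ) ∈ (Finset.range N).powersetCard 3 := by
      rw [Finset.mem_powersetCard]
      constructor
      · intro a ha
        simp only [Finset.mem_insert, Finset.mem_singleton] at ha
        rw [Finset.mem_range]
        rcases ha with rfl | rfl | rfl <;> assumption
      · rw [Finset.card_eq_three]
        exact ⟨x, y, z, fun h => hxy (by rw [h]), fun h => hxz (by rw [h]),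
          fun h => hyz (by rw [h]), rfl⟩
    have hzero : ∀ a b c : ℕ, ({x, y, z} : Finset ℕ) = {a, b, c} →
        topInd r a b c * patt G a b c = 0 := by
      intro a b c heq
      by_cases hab : r a < r c ∧ r b < r c
      · have hno : ¬ (G a b ∧ ¬ (G a c ∧ G b c)) := fun h =>
          he (Finset.mem_filter.mpr ⟨hmem, a, b, c, heq, hab.1, hab.2, h.1, h.2⟩)
        have : patt G a b c = 0 := by
          unfold patt relInd
          by_cases g1 : G a b
          · have : G a c ∧ G b c := by by_contra hc; exact hno ⟨g1, hc⟩
            simp [this.1, this.2]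
          · simp [g1]
        rw [this, mul_zero]
      · simp [topInd, hab]
    rw [hzero x y z rfl, hzero x z y (by ext; simp; tauto), hzero y z x (by ext; simp; tauto)]
    linarith

lemma top_ge (r : ℕ → ℕ) (x y z : ℕ) :
    1 - (tie r x y + tie r x z + tie r y z) ≤
      topInd r x y z + topInd r x z y + topInd r y z x := by
  unfold topInd tie
  split_ifs <;> first | (exfalso; omega) | norm_num

/-- Reordering of triple sums. -/
lemma sum_rot (X Y Z : Finset ℕ) (f : ℕ → ℕ → ℕ → ℝ) :
    ∑ z ∈ Z, ∑ x ∈ X, ∑ y ∈ Y, f x y z = ∑ x ∈ X, ∑ y ∈ Y, ∑ z ∈ Z, f x y z := by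
  rw [Finset.sum_comm]
  exact Finset.sum_congr rfl fun x _ => Finset.sum_comm

lemma sum_tie_le {V : Finset ℕ} {r : ℕ → ℕ} {T : ℝ}
    (hT : ∑ x ∈ V, ∑ y ∈ V, tie r x y ≤ T) {X Y : Finset ℕ} (hX : X ⊆ V) (hY : Y ⊆ V) :
    ∑ x ∈ X, ∑ y ∈ Y, tie r x y ≤ T := by
  refine le_trans ?_ hT
  refine (Finset.sum_le_sum fun x _ => Finset.sum_le_sum_of_subset_of_nonneg hY
    fun _ _ _ => tie_nonneg _ _ _).trans ?_
  exact Finset.sum_le_sum_of_subset_of_nonneg hX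
    fun _ _ _ => Finset.sum_nonneg fun _ _ => tie_nonneg _ _ _

/-- A quasirandom graph of density `α` together with a rank function with few ties yields a
3-graph of uniform density `α - α ^ 3`. -/
lemma eVVV_fullGraph_ge {N M : ℕ} {r : ℕ → ℕ} {G : ℕ → ℕ → Prop} {α D T : ℝ} (hM : 1 ≤ M)
    (hα0 : 0 ≤ α) (hα1 : α ≤ 1) (hr : ∀ v ∈ Finset.range N, r v < M)
    (hD : ∀ A ⊆ Finset.range N, ∑ z ∈ Finset.range N, |∑ x ∈ A, dev G α x z| ≤ D)
    (hT : ∑ x ∈ Finset.range N, ∑ y ∈ Finset.range N, tie r x y ≤ T)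
    {X Y Z : Finset ℕ} (hX : X ⊆ Finset.range N) (hY : Y ⊆ Finset.range N)
    (hZ : Z ⊆ Finset.range N) :
    (α - α ^ 3) * X.card * Y.card * Z.card - 12 * M * D * N - 6 * T * N ≤
      eVVV (fullGraph N r G) X Y Z := by
  classical
  have h0 : (eVVV (fullGraph N r G) X Y Z : ℝ) = ∑ x ∈ X, ∑ y ∈ Y, ∑ z ∈ Z,
      if ({x, y, z} : Finset ℕ) ∈ (fullGraph N r G).edges then (1 : ℝ) else 0 := by
    unfold eVVV
    rw [Finset.card_filter, Finset.sum_product]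
    push_cast
    refine Finset.sum_congr rfl fun x _ => ?_
    rw [Finset.sum_product]
  have h1 : ∑ x ∈ X, ∑ y ∈ Y, ∑ z ∈ Z, (topInd r x y z * patt G x y z +
      topInd r x z y * patt G x z y + topInd r y z x * patt G y z x -
      (tie r x y + tie r x z + tie r y z)) ≤ eVVV (fullGraph N r G) X Y Z := by
    rw [h0]
    exact Finset.sum_le_sum fun x hx => Finset.sum_le_sum fun y hy => Finset.sum_le_sum
      fun z hz => edge_ge (Finset.mem_range.mp (hX hx)) (Finset.mem_range.mp (hY hy))
        (Finset.mem_range.mp (hZ hz))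
  have h2 : ∑ x ∈ X, ∑ y ∈ Y, ∑ z ∈ Z, (1 - (tie r x y + tie r x z + tie r y z)) ≤
      ∑ x ∈ X, ∑ y ∈ Y, ∑ z ∈ Z, (topInd r x y z + topInd r x z y + topInd r y z x) :=
    Finset.sum_le_sum fun x _ => Finset.sum_le_sum fun y _ => Finset.sum_le_sum
      fun z _ => top_ge r x y z
  simp only [Finset.sum_sub_distrib, Finset.sum_add_distrib] at h1 h2
  -- the apex may come from any of the three sets
  have c1 := top_count hM hα0 hα1 hr hD hX hY hZ
  have c2 := top_count hM hα0 hα1 hr hD hX hZ hY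
  have c3 := top_count hM hα0 hα1 hr hD hY hZ hX
  rw [sum_rot X Y Z, sum_rot X Y Z (fun x y z => topInd r x y z * patt G x y z)] at c1
  have s2 : ∀ f : ℕ → ℕ → ℕ → ℝ, ∑ y ∈ Y, ∑ x ∈ X, ∑ z ∈ Z, f x z y =
      ∑ x ∈ X, ∑ y ∈ Y, ∑ z ∈ Z, f x z y := fun f => Finset.sum_comm
  rw [s2, s2 (fun x z y => topInd r x z y * patt G x z y)] at c2
  have hN : (X.card : ℝ) ≤ N ∧ (Y.card : ℝ) ≤ N ∧ (Z.card : ℝ) ≤ N := by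
    refine ⟨?_, ?_, ?_⟩
    · exact_mod_cast (Finset.card_le_card hX).trans_eq (Finset.card_range N)
    · exact_mod_cast (Finset.card_le_card hY).trans_eq (Finset.card_range N)
    · exact_mod_cast (Finset.card_le_card hZ).trans_eq (Finset.card_range N)
  have hT0 : 0 ≤ T := (Finset.sum_nonneg fun _ _ => Finset.sum_nonneg
    fun _ _ => tie_nonneg _ _ _).trans hT
  have b1 : ∑ x ∈ X, ∑ y ∈ Y, ∑ z ∈ Z, tie r x y ≤ T * N := by
    have := sum_tie_le hT hX hY
    simp only [Finset.sum_const, nsmul_eq_mul, ← Finset.mul_sum]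
    have h0 : 0 ≤ ∑ x ∈ X, ∑ y ∈ Y, tie r x y :=
      Finset.sum_nonneg fun _ _ => Finset.sum_nonneg fun _ _ => tie_nonneg _ _ _
    rw [mul_comm]
    exact mul_le_mul this hN.2.2 (Nat.cast_nonneg _) hT0
  have b2 : ∑ x ∈ X, ∑ y ∈ Y, ∑ z ∈ Z, tie r x z ≤ T * N := by
    have := sum_tie_le hT hX hZ
    simp only [Finset.sum_const, nsmul_eq_mul, ← Finset.mul_sum]
    rw [mul_comm]
    exact mul_le_mul this hN.2.1 (Nat.cast_nonneg _) hT0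
  have b3 : ∑ x ∈ X, ∑ y ∈ Y, ∑ z ∈ Z, tie r y z ≤ T * N := by
    have := sum_tie_le hT hY hZ
    simp only [Finset.sum_const, nsmul_eq_mul]
    rw [mul_comm]
    exact mul_le_mul this hN.1 (Nat.cast_nonneg _) hT0
  have hq0 : 0 ≤ α - α ^ 3 :=
    sub_nonneg.mpr (pow_le_of_le_one hα0 hα1 (by norm_num))
  have hq1 : α - α ^ 3 ≤ 1 := by
    have : 0 ≤ α ^ 3 := by positivity
    linarith
  have h3 := mul_le_mul_of_nonneg_left h2 hq0
  have hTN : 0 ≤ 3 * (T * N) := by positivity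
  have h4 : (α - α ^ 3) * (3 * (T * N)) ≤ 3 * (T * N) := by nlinarith
  have hcard : ∑ x ∈ X, ∑ y ∈ Y, ∑ z ∈ Z, (1 : ℝ) = X.card * Y.card * Z.card := by
    simp [mul_assoc]
  rw [hcard] at h3
  have h5 := mul_le_mul_of_nonneg_left (add_le_add (add_le_add b1 b2) b3) hq0
  simp only [Finset.card_range] at c1 c2 c3
  nlinarith

/-! ### A quasirandom graph over `ZMod p` and the lower bound -/

/-- The balanced indicator of `{0, …, k - 1}` in `ZMod p`. -/
def bal (p k : ℕ) (t : ZMod p) : ℝ := (if t.val < k then 1 else 0) - (k : ℝ) / p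

lemma sum_bal (p k : ℕ) [Fact p.Prime] (hk : k ≤ p) : ∑ t : ZMod p, bal p k t = 0 := by
  have hp : (0 : ℝ) < p := by exact_mod_cast (Fact.out : p.Prime).pos
  have hc : (Finset.univ.filter fun t : ZMod p => t.val < k).card = k := by
    have : (Finset.univ.filter fun t : ZMod p => t.val < k).image ZMod.val = Finset.range k := by
      ext a
      simp only [Finset.mem_image, Finset.mem_filter, Finset.mem_univ, true_and, Finset.mem_range]
      constructor
      · rintro ⟨t, h, rfl⟩; exact h
      · intro h
        have : (a : ZMod p).val = a := ZMod.val_cast_of_lt (by omega)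
        exact ⟨a, by omega, this⟩
    have h2 := Finset.card_image_of_injective
      (Finset.univ.filter fun t : ZMod p => t.val < k) (ZMod.val_injective p)
    rw [← h2, this, Finset.card_range]
  unfold bal
  rw [Finset.sum_sub_distrib, ← Finset.sum_filter, Finset.sum_const, hc]
  simp
  field_simp
  simp

lemma abs_bal_le (p k : ℕ) [Fact p.Prime] (hk : k ≤ p) (t : ZMod p) : |bal p k t| ≤ 1 := by
  have hp : (0 : ℝ) < p := by exact_mod_cast (Fact.out : p.Prime).pos
  have h1 : (k : ℝ) / p ≤ 1 := by rw [div_le_one hp]; exact_mod_cast hk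
  have h0 : 0 ≤ (k : ℝ) / p := by positivity
  unfold bal
  rw [abs_le]
  split_ifs <;> constructor <;> linarith

/-- Vanishing codegree correlation: for `a ≠ a'` the map `(c, d) ↦ (b + d + a c, b' + d + a' c)`
is a bijection of the plane over `ZMod p`. -/
lemma sum_bal_mul (p k : ℕ) [Fact p.Prime] (hk : k ≤ p) {a a' b b' : ZMod p} (h : a ≠ a') :
    ∑ w : ZMod p × ZMod p, bal p k (b + w.2 + a * w.1) * bal p k (b' + w.2 + a' * w.1) = 0 := by
  have hinj : Function.Injective
      fun w : ZMod p × ZMod p => (b + w.2 + a * w.1, b' + w.2 + a' * w.1) := by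
    rintro ⟨c, d⟩ ⟨c', d'⟩ heq
    simp only [Prod.mk.injEq] at heq
    obtain ⟨h1, h2⟩ := heq
    have h3 : (a - a') * (c - c') = 0 := by linear_combination h1 - h2
    have hc : c = c' := by
      rcases mul_eq_zero.mp h3 with h4 | h4
      · exact absurd (sub_eq_zero.mp h4) h
      · exact sub_eq_zero.mp h4
    subst hc
    have : d = d' := by linear_combination h1
    rw [this]
  have hbij := Finite.injective_iff_bijective.mp hinj
  rw [Fintype.sum_bijective _ hbij _ (fun w => bal p k w.1 * bal p k w.2) (fun _ => rfl),
    Fintype.sum_prod_type, ← Finset.sum_mul_sum, sum_bal p k hk, zero_mul]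

lemma sum_same_slope (p M : ℕ) [Fact p.Prime] :
    ∑ w : Fin M × ZMod p × ZMod p, ∑ w' : Fin M × ZMod p × ZMod p,
      (if w.2.1 = w'.2.1 then (M : ℝ) * p ^ 2 else 0) = (M : ℝ) ^ 3 * p ^ 5 := by
  have h : ∀ g : ZMod p → ZMod p → ℝ, ∑ w : Fin M × ZMod p × ZMod p,
      ∑ w' : Fin M × ZMod p × ZMod p, g w.2.1 w'.2.1 = M ^ 2 * p ^ 2 * ∑ a, ∑ a', g a a' := by
    intro g
    simp only [Fintype.sum_prod_type, Finset.sum_const, Finset.card_univ, Fintype.card_fin,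
      ZMod.card, nsmul_eq_mul, ← Finset.mul_sum]
    ring
  rw [h fun a a' => if a = a' then (M : ℝ) * p ^ 2 else 0]
  simp only [Finset.sum_ite_eq, Finset.mem_univ, if_true, Finset.sum_const, Finset.card_univ,
    ZMod.card, nsmul_eq_mul]
  ring

lemma sum_same_level (p M : ℕ) [Fact p.Prime] :
    ∑ w : Fin M × ZMod p × ZMod p, ∑ w' : Fin M × ZMod p × ZMod p,
      (if w.1 = w'.1 then (1 : ℝ) else 0) = (M : ℝ) * p ^ 4 := by
  have h : ∀ g : Fin M → Fin M → ℝ, ∑ w : Fin M × ZMod p × ZMod p,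
      ∑ w' : Fin M × ZMod p × ZMod p, g w.1 w'.1 = p ^ 4 * ∑ a, ∑ a', g a a' := by
    intro g
    simp only [Fintype.sum_prod_type, Finset.sum_const, Finset.card_univ, Fintype.card_prod,
      ZMod.card, nsmul_eq_mul, ← Finset.mul_sum]
    push_cast
    ring
  rw [h fun a a' => if a = a' then (1 : ℝ) else 0]
  simp only [Finset.sum_ite_eq, Finset.mem_univ, if_true, Finset.sum_const, Finset.card_univ,
    Fintype.card_fin, nsmul_eq_mul]
  ring

/-- The quasirandom graph: vertices carry a level in `Fin M` and a point `(a, b)` of the plane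
over `ZMod p`, and two vertices are joined when `b + b' + a a'` lies in `{0, …, k - 1}`. The level
serves as rank. -/
lemma exists_quasirandom (p k M : ℕ) [Fact p.Prime] (hk : k ≤ p) (hM : 1 ≤ M) :
    ∃ (r : ℕ → ℕ) (G : ℕ → ℕ → Prop), (∀ u v, G u v → G v u) ∧
      (∀ v ∈ Finset.range (M * p ^ 2), r v < M) ∧
      (∑ x ∈ Finset.range (M * p ^ 2), ∑ x' ∈ Finset.range (M * p ^ 2),
        |∑ z ∈ Finset.range (M * p ^ 2), dev G ((k : ℝ) / p) x z * dev G ((k : ℝ) / p) x' z| ≤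
          (M : ℝ) ^ 3 * p ^ 5) ∧
      ∑ x ∈ Finset.range (M * p ^ 2), ∑ y ∈ Finset.range (M * p ^ 2), tie r x y ≤
        (M : ℝ) * p ^ 4 := by
  classical
  have hp := (Fact.out : p.Prime).pos
  set N := M * p ^ 2 with hN
  have hNpos : 0 < N := by positivity
  let W := Fin M × ZMod p × ZMod p
  have hWc : Fintype.card W = N := by
    simp only [W, Fintype.card_prod, Fintype.card_fin, ZMod.card, hN]; ring
  let e : W ≃ Fin N := Fintype.equivFinOfCardEq hWc
  let dec : ℕ → W := fun n => if h : n < N then e.symm ⟨n, h⟩ else e.symm ⟨0, hNpos⟩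
  have hsum : ∀ f : W → ℝ, ∑ n ∈ Finset.range N, f (dec n) = ∑ w, f w := by
    intro f
    rw [Finset.sum_range, ← Equiv.sum_comp e.symm]
    refine Finset.sum_congr rfl fun i _ => ?_
    simp [dec]
  let r : ℕ → ℕ := fun n => (dec n).1
  let G : ℕ → ℕ → Prop := fun n m =>
    ((dec n).2.2 + (dec m).2.2 + (dec n).2.1 * (dec m).2.1).val < k
  have hdev : ∀ n m, dev G ((k : ℝ) / p) n m =
      bal p k ((dec n).2.2 + (dec m).2.2 + (dec n).2.1 * (dec m).2.1) := by
    intro n m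
    by_cases h : G n m
    · have h' : ((dec n).2.2 + (dec m).2.2 + (dec n).2.1 * (dec m).2.1).val < k := h
      simp only [dev, relInd, bal, h, h', if_true]
    · have h' : ¬ ((dec n).2.2 + (dec m).2.2 + (dec n).2.1 * (dec m).2.1).val < k := h
      simp only [dev, relInd, bal, h, h', if_false]
  refine ⟨r, G, ?_, fun v _ => (dec v).1.isLt, ?_, ?_⟩
  · intro u v h
    simp only [G] at h ⊢
    convert h using 2; ring
  · simp only [hdev]
    let f : W → W → ℝ := fun x x' => |∑ z : W, bal p k (x.2.2 + z.2.2 + x.2.1 * z.2.1) *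
      bal p k (x'.2.2 + z.2.2 + x'.2.1 * z.2.1)|
    have h1 : ∀ x x' : ℕ, |∑ z ∈ Finset.range N,
        bal p k ((dec x).2.2 + (dec z).2.2 + (dec x).2.1 * (dec z).2.1) *
          bal p k ((dec x').2.2 + (dec z).2.2 + (dec x').2.1 * (dec z).2.1)| =
        f (dec x) (dec x') := fun x x' => congrArg abs (hsum fun z =>
          bal p k ((dec x).2.2 + z.2.2 + (dec x).2.1 * z.2.1) *
          bal p k ((dec x').2.2 + z.2.2 + (dec x').2.1 * z.2.1))
    simp only [h1]
    have h2 : ∀ x : ℕ, ∑ x' ∈ Finset.range N, f (dec x) (dec x') = ∑ w', f (dec x) w' :=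
      fun x => hsum _
    simp only [h2]
    rw [hsum fun w => ∑ w', f w w']
    have hf : ∀ w w' : W, f w w' ≤ if w.2.1 = w'.2.1 then (M : ℝ) * p ^ 2 else 0 := by
      intro w w'
      split_ifs with hw
      · refine (Finset.abs_sum_le_sum_abs _ _).trans ?_
        have : ∑ z : W, |bal p k (w.2.2 + z.2.2 + w.2.1 * z.2.1) *
            bal p k (w'.2.2 + z.2.2 + w'.2.1 * z.2.1)| ≤ ∑ z : W, (1 : ℝ) := by
          refine Finset.sum_le_sum fun z _ => ?_
          rw [abs_mul]
          exact mul_le_one₀ (abs_bal_le p k hk _) (abs_nonneg _) (abs_bal_le p k hk _)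
        refine this.trans_eq ?_
        rw [Finset.sum_const, Finset.card_univ, hWc, hN]
        simp
      · have : ∑ z : W, bal p k (w.2.2 + z.2.2 + w.2.1 * z.2.1) *
            bal p k (w'.2.2 + z.2.2 + w'.2.1 * z.2.1) = 0 := by
          rw [Fintype.sum_prod_type]
          exact Finset.sum_eq_zero fun i _ => sum_bal_mul p k hk hw
        simp only [f]
        rw [this, abs_zero]
    exact (Finset.sum_le_sum fun w _ => Finset.sum_le_sum fun w' _ => hf w w').trans_eq
      (sum_same_slope p M)
  · let t : W → W → ℝ := fun w w' => if w.1 = w'.1 then 1 else 0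
    have h1 : ∀ x y : ℕ, tie r x y = t (dec x) (dec y) := by
      intro x y
      simp only [tie, t, r, Fin.ext_iff]
    simp only [h1]
    have h2 : ∀ x : ℕ, ∑ x' ∈ Finset.range N, t (dec x) (dec x') = ∑ w', t (dec x) w' :=
      fun x => hsum _
    simp only [h2]
    rw [hsum fun w => ∑ w', t w w']
    exact (sum_same_level p M).le

lemma qval_sub_le {α s : ℝ} (h0 : 0 ≤ α) (h1 : α ≤ √3 / 3) (h2 : √3 / 3 - 1 / s ≤ α)
    (hs : 1 ≤ s) : qval - (α - α ^ 3) ≤ 1 / s * 3 := by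
  rw [qval_sub]
  have hc : √3 / 3 ≤ 1 := by
    have : √3 ≤ 2 := by rw [Real.sqrt_le_left (by norm_num)]; norm_num
    linarith
  have h3 : (√3 / 3 - α) ^ 2 ≤ 1 / s := by
    have h4 : (√3 / 3 - α) * (√3 / 3 - α) ≤ 1 / s * 1 :=
      mul_le_mul (by linarith) (by linarith) (by linarith) (by positivity)
    linarith only [h4, sq (√3 / 3 - α)]
  have h4 : (α - √3 / 3) ^ 2 ≤ 1 / s := by rwa [← neg_sub, neg_sq]
  exact mul_le_mul h4 (by linarith) (by positivity) (by positivity)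

lemma card_mul_le {N : ℕ} {X Y Z : Finset ℕ} (hX : X ⊆ Finset.range N)
    (hY : Y ⊆ Finset.range N) (hZ : Z ⊆ Finset.range N) :
    (X.card : ℝ) * Y.card * Z.card ≤ (N : ℝ) ^ 3 := by
  have h : ∀ A : Finset ℕ, A ⊆ Finset.range N → A.card ≤ N := fun A hA =>
    (Finset.card_le_card hA).trans_eq (Finset.card_range N)
  have := Nat.mul_le_mul (Nat.mul_le_mul (h X hX) (h Y hY)) (h Z hZ)
  rw [show N * N * N = N ^ 3 by ring] at this
  exact_mod_cast this

/-- The density `qval` is attained: with the prime `p` and the number `M` of levels large, the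
quasirandom graph of density `k / p ≈ 1 / √3` yields a `(qval, η)`-dense member of the class. -/
lemma lower_bound (η : ℝ) (hη : 0 < η) (n : ℕ) :
    ∃ H : ThreeGraph, n ≤ H.verts.card ∧ Cls H ∧ IsDenseVVV H qval η := by
  set c : ℝ := √3 / 3 with hc
  have hc0 : 0 < c := by positivity
  have hc1 : c ≤ 1 := by
    have : √3 ≤ 2 := by rw [Real.sqrt_le_left (by norm_num)]; norm_num
    linarith
  obtain ⟨M, hM⟩ := exists_nat_gt (18 / η)
  have hM0 : (0 : ℝ) < M := lt_trans (by positivity) hM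
  have hM1 : 1 ≤ M := by exact_mod_cast hM0
  obtain ⟨B, hB⟩ := exists_nat_gt ((36 * M / η) ^ 2 + 9 / η)
  obtain ⟨p, hpB, hpp⟩ := Nat.exists_infinite_primes (max B n)
  have : Fact p.Prime := ⟨hpp⟩
  have hp0 : (0 : ℝ) < p := by exact_mod_cast hpp.pos
  have hp1 : (1 : ℝ) ≤ p := by exact_mod_cast hpp.one_le
  have hpB' : (36 * M / η) ^ 2 + 9 / η < p :=
    hB.trans_le (by exact_mod_cast (le_max_left _ _).trans hpB)
  set k := ⌊c * p⌋₊ with hk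
  have hkle : (k : ℝ) ≤ c * p := Nat.floor_le (by positivity)
  have hklt : c * p < k + 1 := Nat.lt_floor_add_one _
  have hkp : k ≤ p := by
    have : (k : ℝ) ≤ p := by nlinarith
    exact_mod_cast this
  set α : ℝ := (k : ℝ) / p with hα
  have hα0 : 0 ≤ α := by positivity
  have hαc : α ≤ c := by rw [hα, div_le_iff₀ hp0]; exact hkle
  have hαc' : c - 1 / p ≤ α := by
    rw [hα, ← sub_nonneg]
    have : (k : ℝ) / p - (c - 1 / p) = (k + 1 - c * p) / p := by field_simp; ring
    rw [this]
    exact div_nonneg (by linarith) hp0.le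
  obtain ⟨r, G, hG, hr, hQ, hT⟩ := exists_quasirandom p k M hkp hM1
  set N := M * p ^ 2 with hN
  have hNR : (N : ℝ) = M * p ^ 2 := by rw [hN]; push_cast; ring
  have hN0 : (0 : ℝ) < N := by rw [hNR]; positivity
  have hcard : (fullGraph N r G).verts.card = N := Finset.card_range N
  refine ⟨fullGraph N r G, ?_, fullGraph_cls N r hG, ?_⟩
  · rw [hcard, hN]
    have h1 : n ≤ p := (le_max_right _ _).trans hpB
    nlinarith [hpp.one_le, Nat.mul_le_mul hM1 (Nat.le_self_pow two_ne_zero p)]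
  · intro X Y Z hX hY hZ
    rw [hcard]
    have main := eVVV_fullGraph_ge hM1 hα0 (hαc.trans hc1) hr
      (fun A hA => sum_abs_dev_le hQ hA) hT hX hY hZ
    rw [Finset.card_range] at main
    -- the square root equals `N ^ 2 / √p`
    have hD : √((N : ℝ) * (M ^ 3 * p ^ 5)) = N ^ 2 / √p := by
      rw [Real.sqrt_eq_iff_mul_self_eq (by positivity) (by positivity)]
      rw [div_mul_div_comm, Real.mul_self_sqrt hp0.le, hNR]
      field_simp
    rw [hD] at main
    have hsp : 36 * M / η ≤ √p := by
      apply Real.le_sqrt_of_sq_le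
      have : 0 ≤ 9 / η := by positivity
      linarith
    have hsp0 : 0 < √(p : ℝ) := Real.sqrt_pos.mpr hp0
    have e1 : 12 * M * ((N : ℝ) ^ 2 / √p) * N ≤ η / 3 * N ^ 3 := by
      have h1 : 36 * M ≤ √p * η := by rwa [div_le_iff₀ hη] at hsp
      have h2 : 12 * M * ((N : ℝ) ^ 2 / √p) * N = 12 * M / √p * N ^ 3 := by ring
      rw [h2]
      refine mul_le_mul_of_nonneg_right ?_ (by positivity)
      rw [div_le_iff₀ hsp0]
      linarith
    have e2 : 6 * ((M : ℝ) * p ^ 4) * N ≤ η / 3 * N ^ 3 := by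
      have h1 : 18 ≤ M * η := by rw [div_lt_iff₀ hη] at hM; exact hM.le
      have h2 : (N : ℝ) ^ 3 = M * ((M : ℝ) * p ^ 4) * N := by rw [hNR]; ring
      rw [h2]
      have : 0 ≤ ((M : ℝ) * p ^ 4) * N := by positivity
      nlinarith
    have e3 : qval * X.card * Y.card * Z.card ≤
        (α - α ^ 3) * X.card * Y.card * Z.card + η / 3 * N ^ 3 := by
      have h5 : 9 / η ≤ p := le_trans (le_add_of_nonneg_left (sq_nonneg _)) hpB'.le
      have h6 : 1 / (p : ℝ) * 3 ≤ η / 3 := by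
        rw [div_le_iff₀ hη] at h5
        rw [div_mul_eq_mul_div, div_le_iff₀ hp0]
        linarith only [h5]
      have h2 := (qval_sub_le hα0 hαc hαc' hp1).trans h6
      have h8 : 0 ≤ (X.card : ℝ) * Y.card * Z.card := by positivity
      have h9 := mul_le_mul_of_nonneg_right h2 h8
      have h10 := mul_le_mul_of_nonneg_left (card_mul_le hX hY hZ)
        (show 0 ≤ η / 3 by positivity)
      linarith only [h9, h10]
    show qval * X.card * Y.card * Z.card - η * (N : ℝ) ^ 3 ≤ _
    linarith only [main, e1, e2, e3]

end

/-- The set of uniform Turán densities contains an irrational number. -/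
theorem piVVV_irrational_value :
    ∃ q : ℝ, Irrational q ∧ ∃ 𝓕 : Set ThreeGraph, piVVV 𝓕 = q := by
  refine ⟨qval, irrational_qval, {F | ¬ Cls F}, ?_⟩
  unfold piVVV
  simp only [avoids_iff]
  refine IsGreatest.csSup_eq ⟨⟨qval_nonneg, qval_le_one, lower_bound⟩, ?_⟩
  rintro d ⟨_, hd1, h⟩
  exact upper_bound h hd1
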